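/- Let t, t' be resource λμ-terms and T a sum in 2⟨λμʳ⟩. If t →_{μʳ} t' + T (i.e. t reduces to the sum t' + T by contracting a μʳ-redex), then m(t) > m(t') in the multiset order on finite multisets of naturals. -/

import Mathlib

/-!
Contracting `(μa.[b]t)[ū]` erases the bag `[ū]` and pushes its elements, grouped into new bags, under
at least one named subterm. The number of `μ`-abstractions is unchanged, since linear named
application neither erases nor duplicates resources (`nApp_spec`), and every bag already in `t` keeps
its depth. Hence the bag occurrences that change are the erased bag, at depth `0`, and those inside
`ū`, while every bag occurrence replacing them has depth at least `1`; as the redex contains a `μ`,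
each of the latter weighs strictly less than the erased bag.

The relation `Drop t s` records this situation: equal degrees, depths that differ only by exchanging
a multiset containing some `d < deg_μ(t)` for a multiset of depths `> d`. It is stable under resource
contexts (`drop_of_ctx`), a surrounding `μ` shifting the degree and all depths by one, and it implies
`m(s) < m(t)` (`Drop.mlt`).
-/

set_option maxHeartbeats 1000000

namespace RLMu

inductive Rt : Type where
  | var : ℕ → Rt
  | lam : ℕ → Rt → Rt
  | app : Rt → List Rt → Rt
  | mu  : ℕ → ℕ → Rt → Rt

noncomputable instance : DecidableEq Rt := Classical.decEq _

namespace Rt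

mutual
  def renameN (a b : ℕ) : Rt → Rt
    | var y => var y
    | lam y t => lam y (renameN a b t)
    | app t ts => app (renameN a b t) (renameNBag a b ts)
    | mu g e t =>
        if g = b then mu g e t
        else mu g (if e = b then a else e) (renameN a b t)
  def renameNBag (a b : ℕ) : List Rt → List Rt
    | [] => []
    | t :: ts => renameN a b t :: renameNBag a b ts
end

def modifyIdx (t : Rt) : List (List Rt) → ℕ → List (List Rt)
  | [], _ => []
  | l :: ls, 0 => (t :: l) :: ls
  | l :: ls, i + 1 => l :: modifyIdx t ls i

def splits (n : ℕ) : List Rt → Multiset (List (List Rt))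
  | [] => {List.replicate n []}
  | t :: ts => (splits n ts).bind fun ls => (Multiset.range n).map fun i => modifyIdx t ls i

def splits2 : List Rt → Multiset (List Rt × List Rt)
  | [] => {([], [])}
  | t :: ts => (splits2 ts).bind fun p => {(t :: p.1, p.2), (p.1, t :: p.2)}

-- the (quantitative) linear substitution t⟨[ū]/x⟩ : the sum over all ways of
-- assigning the elements of the bag bijectively to the free occurrences of x in t
mutual
  def linSub (x : ℕ) : Rt → List Rt → Multiset Rt
    | var y, bag =>
        if y = x then (match bag with | [u] => ({u} : Multiset Rt) | _ => 0)
        else (match bag with | [] => ({var y} : Multiset Rt) | _ => 0)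
    | lam y t, bag =>
        if y = x then (match bag with | [] => ({lam y t} : Multiset Rt) | _ => 0)
        else (linSub x t bag).map (lam y)
    | mu g e t, bag => (linSub x t bag).map (mu g e)
    | app t ts, bag =>
        (splits (ts.length + 1) bag).bind fun ls =>
          match ls with
          | l0 :: rest =>
              (linSub x t l0).bind fun s =>
                (linSubBag x ts rest).map fun ss => app s ss
          | [] => 0
  def linSubBag (x : ℕ) : List Rt → List (List Rt) → Multiset (List Rt)
    | [], [] => {([] : List Rt)}
    | [], _ :: _ => 0
    | _ :: _, [] => 0
    | t :: ts, l :: ls =>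
        (linSub x t l).bind fun s => (linSubBag x ts ls).map fun ss => s :: ss
end

end Rt

end RLMu

namespace RLMu
namespace Rt

-- the (quantitative) linear named application ⟨t⟩_a[ū]
mutual
  def nApp (a : ℕ) : Rt → List Rt → Multiset Rt
    | var y, bag => (match bag with | [] => ({var y} : Multiset Rt) | _ => 0)
    | lam y t, bag => (nApp a t bag).map (lam y)
    | mu g e t, bag =>
        if g = a then (match bag with | [] => ({mu g e t} : Multiset Rt) | _ => 0)
        else if e = a then
          (splits2 bag).bind fun p =>
            (nApp a t p.1).map fun s => mu g e (app s p.2)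
        else (nApp a t bag).map (mu g e)
    | app t ts, bag =>
        (splits (ts.length + 1) bag).bind fun ls =>
          match ls with
          | l0 :: rest =>
              (nApp a t l0).bind fun s =>
                (nAppBag a ts rest).map fun ss => app s ss
          | [] => 0
  def nAppBag (a : ℕ) : List Rt → List (List Rt) → Multiset (List Rt)
    | [], [] => {([] : List Rt)}
    | [], _ :: _ => 0
    | _ :: _, [] => 0
    | t :: ts, l :: ls =>
        (nApp a t l).bind fun s => (nAppBag a ts ls).map fun ss => s :: ss
end

mutual
  def degName (a : ℕ) : Rt → ℕ
    | var _ => 0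
    | lam _ t => degName a t
    | app t ts => degName a t + degNameBag a ts
    | mu g e t => if g = a then 0 else (if e = a then 1 else 0) + degName a t
  def degNameBag (a : ℕ) : List Rt → ℕ
    | [] => 0
    | t :: ts => degName a t + degNameBag a ts
end

/-- the linear named application `⟨[e]t⟩_g [ū]` on the named term `[e]t`, a named
term `[e']t'` being represented by the pair `(e', t')` -/
def nAppNamed (g e : ℕ) (t : Rt) (bag : List Rt) : Multiset (ℕ × Rt) :=
  if e = g then
    (splits2 bag).bind fun p => (nApp g t p.1).map fun s => (g, app s p.2)
  else (nApp g t bag).map fun s => (e, s)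

/-- `μa.⟨[b]t⟩_a [ū]`, the reduct of the μ-redex `(μa.[b]t)[ū]` -/
def muRedex (a b : ℕ) (t : Rt) (bag : List Rt) : Multiset Rt :=
  if b = a then
    (splits2 bag).bind fun p => (nApp a t p.1).map fun s => mu a a (app s p.2)
  else (nApp a t bag).map (mu a b)

end Rt

open Rt

/-- base step of the λʳ-reduction -/
inductive BaseLam : Rt → Multiset Rt → Prop
  | step (x : ℕ) (t : Rt) (bag : List Rt) :
      BaseLam (.app (.lam x t) bag) (linSub x t bag)

/-- base step of the μʳ-reduction -/
inductive BaseMu : Rt → Multiset Rt → Prop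
  | step (a b : ℕ) (t : Rt) (bag : List Rt) :
      BaseMu (.app (.mu a b t) bag) (muRedex a b t bag)

/-- base step of the ρʳ-reduction -/
inductive BaseRho : Rt → Multiset Rt → Prop
  | step (g a b e : ℕ) (t : Rt) :
      BaseRho (.mu g a (.mu b e t))
        ({.mu g (if e = b then a else e) (renameN a b t)} : Multiset Rt)

/-- closure of a base reduction under single-hole resource contexts -/
inductive Ctx (B : Rt → Multiset Rt → Prop) : Rt → Multiset Rt → Prop
  | base {t S} : B t S → Ctx B t S
  | lam (x : ℕ) {t S} : Ctx B t S → Ctx B (.lam x t) (S.map (.lam x))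
  | mu (a b : ℕ) {t S} : Ctx B t S → Ctx B (.mu a b t) (S.map (.mu a b))
  | appL (bag : List Rt) {t S} :
      Ctx B t S → Ctx B (.app t bag) (S.map fun s => .app s bag)
  | appR (t : Rt) (l r : List Rt) {u S} :
      Ctx B u S → Ctx B (.app t (l ++ u :: r)) (S.map fun s => .app t (l ++ s :: r))

/-- the quantitative resource reduction →ᵣ⁺ from terms to sums in ℕ⟨λμʳ⟩ -/
def QStep : Rt → Multiset Rt → Prop :=
  Ctx fun t S => BaseLam t S ∨ BaseMu t S ∨ BaseRho t S

/-- the quantitative resource reduction →ᵣ⁺ on sums of ℕ⟨λμʳ⟩ -/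
inductive QRed : Multiset Rt → Multiset Rt → Prop
  | mk {t : Rt} {S R : Multiset Rt} : QStep t S → QRed (t ::ₘ R) (S + R)

/-- the qualitative version (with idempotent sum, i.e. with sums in 2⟨λμʳ⟩)
of the contextual closure of a base reduction: from terms to sums in 2⟨λμʳ⟩ -/
noncomputable def StepOf (B : Rt → Multiset Rt → Prop) (t : Rt) (T : Finset Rt) : Prop :=
  ∃ S : Multiset Rt, Ctx B t S ∧ T = S.toFinset

/-- the reduction →_{λʳ} : contextual closure of the λʳ base step, in 2⟨λμʳ⟩ -/
noncomputable def StepLam : Rt → Finset Rt → Prop := StepOf BaseLam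
/-- the reduction →_{μʳ} : contextual closure of the μʳ base step, in 2⟨λμʳ⟩ -/
noncomputable def StepMu : Rt → Finset Rt → Prop := StepOf BaseMu
/-- the reduction →_{ρʳ} : contextual closure of the ρʳ base step, in 2⟨λμʳ⟩ -/
noncomputable def StepRho : Rt → Finset Rt → Prop := StepOf BaseRho

/-- the resource reduction →ᵣ from terms to sums in 2⟨λμʳ⟩ -/
noncomputable def RStep (t : Rt) (T : Finset Rt) : Prop :=
  ∃ S : Multiset Rt, QStep t S ∧ T = S.toFinset

/-- the resource reduction →ᵣ on sums in 2⟨λμʳ⟩ -/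
inductive FRed : Finset Rt → Finset Rt → Prop
  | mk {t : Rt} {R S : Finset Rt} : RStep t S → t ∉ R → FRed (insert t R) (S ∪ R)

/-- a resource term is →ᵣ-normal -/
def NormalTm (t : Rt) : Prop := ∀ S : Multiset Rt, ¬ QStep t S

end RLMu

namespace RLMu
namespace Rt

-- number of μ-abstractions occurring in a term
mutual
  def degMu : Rt → ℕ
    | var _ => 0
    | lam _ t => degMu t
    | mu _ _ t => degMu t + 1
    | app t ts => degMu t + degMuBag ts
  def degMuBag : List Rt → ℕ
    | [] => 0
    | t :: ts => degMu t + degMuBag ts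
end

-- the multiset of the depths (number of enclosing named subterms) of the
-- occurrences of bags in a term
mutual
  def depths : Rt → Multiset ℕ
    | var _ => 0
    | lam _ t => depths t
    | mu _ _ t => (depths t).map (· + 1)
    | app t ts => (0 : ℕ) ::ₘ (depths t + depthsBag ts)
  def depthsBag : List Rt → Multiset ℕ
    | [] => 0
    | t :: ts => depths t + depthsBag ts
end

/-- the multiset measure `m(t)` : the multiset of `deg_μ(t) - d_t(b)` over the
occurrences `b` of bags in `t` -/
def msr (t : Rt) : Multiset ℕ := (depths t).map fun d => degMu t - d

end Rt

/-- the (Dershowitz–Manna) multiset order on finite multisets of naturals -/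
def MLT (M N : Multiset ℕ) : Prop :=
  ∃ X Y Z : Multiset ℕ, X ≠ 0 ∧ N = Z + X ∧ M = Z + Y ∧ ∀ y ∈ Y, ∃ x ∈ X, y < x

/-- the measure `SN(t) = (m(t), deg_μ(t))` -/
def SNm (t : Rt) : Multiset ℕ × ℕ := (Rt.msr t, Rt.degMu t)

/-- lexicographic order on `!ℕ × ℕ` (multiset order on the first component) -/
def SNlt : Multiset ℕ × ℕ → Multiset ℕ × ℕ → Prop := Prod.Lex MLT (· < ·)

end RLMu

namespace RLMu
namespace Rt

/-! ### Distributing a bag -/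

theorem modifyIdx_length (t : Rt) (ls : List (List Rt)) (i : ℕ) :
    (modifyIdx t ls i).length = ls.length := by
  induction ls generalizing i with
  | nil => simp [modifyIdx]
  | cons l ls ih => cases i <;> simp [modifyIdx, ih]

theorem modifyIdx_degMu (t : Rt) (ls : List (List Rt)) (i : ℕ) (hi : i < ls.length) :
    ((modifyIdx t ls i).map degMuBag).sum = degMu t + (ls.map degMuBag).sum := by
  induction ls generalizing i with
  | nil => simp at hi
  | cons l ls ih =>
    cases i with
    | zero => simp [modifyIdx, degMuBag, add_assoc]
    | succ i =>
      have := ih i (by simpa using hi)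
      simp only [modifyIdx, List.map_cons, List.sum_cons, this]
      omega

theorem splits_spec (n : ℕ) (bag : List Rt) (ls : List (List Rt)) (h : ls ∈ splits n bag) :
    ls.length = n ∧ (ls.map degMuBag).sum = degMuBag bag := by
  induction bag generalizing ls with
  | nil =>
    simp only [splits, Multiset.mem_singleton] at h
    subst h
    simp [degMuBag]
  | cons t ts ih =>
    simp only [splits, Multiset.mem_bind, Multiset.mem_map, Multiset.mem_range] at h
    obtain ⟨ls', h', i, hi, rfl⟩ := h
    obtain ⟨h1, h2⟩ := ih ls' h'
    refine ⟨by rw [modifyIdx_length, h1], ?_⟩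
    rw [modifyIdx_degMu _ _ _ (by omega), h2, degMuBag]

theorem splits2_spec (bag : List Rt) (p : List Rt × List Rt) (h : p ∈ splits2 bag) :
    degMuBag p.1 + degMuBag p.2 = degMuBag bag := by
  induction bag generalizing p with
  | nil =>
    simp only [splits2, Multiset.mem_singleton] at h
    subst h
    simp [degMuBag]
  | cons t ts ih =>
    simp only [splits2, Multiset.mem_bind, Multiset.insert_eq_cons, Multiset.mem_cons,
      Multiset.mem_singleton] at h
    obtain ⟨q, hq, rfl | rfl⟩ := h <;> have := ih q hq <;> simp only [degMuBag] <;> omega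

/-! ### Degree and depths under linear named application -/

mutual
/-- Linear named application consumes each resource exactly once, and the bags of `t` survive in
every addend at their original depth. -/
theorem nApp_spec (a : ℕ) : ∀ (t : Rt) (bag : List Rt) (s : Rt), s ∈ nApp a t bag →
    degMu s = degMu t + degMuBag bag ∧ depths t ≤ depths s
  | .var y, bag, s, h => by
    cases bag with
    | nil =>
      simp only [nApp, Multiset.mem_singleton] at h
      subst h
      simp [degMuBag]
    | cons u us => simp [nApp] at h
  | .lam y t, bag, s, h => by
    simp only [nApp, Multiset.mem_map] at h
    obtain ⟨s, hs, rfl⟩ := h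
    simpa only [degMu, depths] using nApp_spec a t bag s hs
  | .mu g e t, bag, s, h => by
    unfold nApp at h
    split_ifs at h with h1 h2
    · cases bag with
      | nil =>
        simp only [Multiset.mem_singleton] at h
        subst h
        simp [degMuBag]
      | cons u us => simp at h
    · simp only [Multiset.mem_bind, Multiset.mem_map] at h
      obtain ⟨p, hp, s, hs, rfl⟩ := h
      obtain ⟨hd, hle⟩ := nApp_spec a t p.1 s hs
      have := splits2_spec bag p hp
      refine ⟨by simp only [degMu]; omega, ?_⟩
      simp only [depths]
      apply Multiset.map_le_map
      exact (hle.trans (Multiset.le_add_right _ _)).trans (Multiset.le_cons_self _ _)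
    · simp only [Multiset.mem_map] at h
      obtain ⟨s, hs, rfl⟩ := h
      obtain ⟨hd, hle⟩ := nApp_spec a t bag s hs
      refine ⟨by simp only [degMu]; omega, ?_⟩
      simp only [depths]
      exact Multiset.map_le_map hle
  | .app t ts, bag, s, h => by
    rw [nApp] at h
    simp only [Multiset.mem_bind] at h
    obtain ⟨ls, hls, h⟩ := h
    obtain ⟨-, hsum⟩ := splits_spec _ _ _ hls
    cases ls with
    | nil => simp at h
    | cons l0 rest =>
      simp only [Multiset.mem_bind, Multiset.mem_map] at h
      obtain ⟨s, hs, ss, hss, rfl⟩ := h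
      obtain ⟨hd, hle⟩ := nApp_spec a t l0 s hs
      obtain ⟨hd', hle'⟩ := nAppBag_spec a ts rest ss hss
      simp only [List.map_cons, List.sum_cons] at hsum
      refine ⟨by simp only [degMu]; omega, ?_⟩
      simp only [depths]
      exact Multiset.cons_le_cons _ (add_le_add hle hle')
theorem nAppBag_spec (a : ℕ) : ∀ (ts : List Rt) (ls : List (List Rt)) (ss : List Rt),
    ss ∈ nAppBag a ts ls →
    degMuBag ss = degMuBag ts + (ls.map degMuBag).sum ∧ depthsBag ts ≤ depthsBag ss
  | [], [], ss, h => by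
    simp only [nAppBag, Multiset.mem_singleton] at h
    subst h
    simp
  | [], _ :: _, ss, h => by simp [nAppBag] at h
  | _ :: _, [], ss, h => by simp [nAppBag] at h
  | t :: ts, l :: ls, ss, h => by
    simp only [nAppBag, Multiset.mem_bind, Multiset.mem_map] at h
    obtain ⟨s, hs, ss, hss, rfl⟩ := h
    obtain ⟨hd, hle⟩ := nApp_spec a t l s hs
    obtain ⟨hd', hle'⟩ := nAppBag_spec a ts ls ss hss
    refine ⟨by simp only [degMuBag, List.map_cons, List.sum_cons]; omega, ?_⟩
    simp only [depthsBag]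
    exact add_le_add hle hle'
end

theorem degMuBag_append (l r : List Rt) : degMuBag (l ++ r) = degMuBag l + degMuBag r := by
  induction l with
  | nil => simp [degMuBag]
  | cons t ts ih => simp only [List.cons_append, degMuBag, ih]; omega

theorem depthsBag_append (l r : List Rt) :
    depthsBag (l ++ r) = depthsBag l + depthsBag r := by
  induction l with
  | nil => simp [depthsBag]
  | cons t ts ih => simp only [List.cons_append, depthsBag, ih, add_assoc]

end Rt

open Rt

/-! ### A context-stable form of the decrease -/

/-- `Drop t s`: `s` has as many `μ`-abstractions as `t`, and its bag depths arise from those of `t`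
by replacing a multiset `X`, containing some `d < deg_μ(t)`, with depths all greater than `d`.
The bound on `d` keeps the truncated subtraction in `msr` strictly decreasing between `d` and any
larger depth. -/
def Drop (t s : Rt) : Prop :=
  degMu s = degMu t ∧ ∃ (Z X Y : Multiset ℕ) (d : ℕ), depths t = Z + X ∧ depths s = Z + Y ∧
    d ∈ X ∧ d < degMu t ∧ ∀ y ∈ Y, d < y

theorem Drop.mlt {t s : Rt} (h : Drop t s) : MLT (msr s) (msr t) := by
  obtain ⟨hdeg, Z, X, Y, d, ht, hs, hd, hlt, hY⟩ := h
  refine ⟨X.map (degMu t - ·), Y.map (degMu t - ·), Z.map (degMu t - ·), ?_, ?_, ?_, ?_⟩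
  · intro h0
    rw [Multiset.map_eq_zero] at h0
    simp [h0] at hd
  · simp [msr, ht]
  · simp [msr, hs, hdeg]
  · intro y hy
    obtain ⟨z, hz, rfl⟩ := Multiset.mem_map.1 hy
    refine ⟨_, Multiset.mem_map_of_mem _ hd, ?_⟩
    have := hY z hz
    omega

theorem Drop.lam {t s : Rt} (x : ℕ) (h : Drop t s) : Drop (.lam x t) (.lam x s) := by
  simpa only [Drop, degMu, depths] using h

theorem Drop.mu {t s : Rt} (a b : ℕ) (h : Drop t s) : Drop (.mu a b t) (.mu a b s) := by
  obtain ⟨hdeg, Z, X, Y, d, ht, hs, hd, hlt, hY⟩ := h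
  refine ⟨by simp [degMu, hdeg], Z.map (· + 1), X.map (· + 1), Y.map (· + 1), d + 1,
    by simp [depths, ht], by simp [depths, hs], Multiset.mem_map_of_mem _ hd,
    by simpa [degMu] using hlt, ?_⟩
  intro y hy
  obtain ⟨z, hz, rfl⟩ := Multiset.mem_map.1 hy
  exact Nat.succ_lt_succ (hY z hz)

/-- A context that adds `n` further `μ`-abstractions and bags of depths `W`, without enclosing the
hole in a new named subterm, preserves `Drop`. -/
theorem Drop.extend {t s t' s' : Rt} (h : Drop t s) (n : ℕ) (W : Multiset ℕ)
    (ht : degMu t' = degMu t + n) (hs : degMu s' = degMu s + n)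
    (ht' : depths t' = W + depths t) (hs' : depths s' = W + depths s) : Drop t' s' := by
  obtain ⟨hdeg, Z, X, Y, d, h1, h2, hd, hlt, hY⟩ := h
  exact ⟨by omega, W + Z, X, Y, d, by rw [ht', h1, add_assoc], by rw [hs', h2, add_assoc], hd,
    by omega, hY⟩

/-! ### Contracting a redex -/

/-- The common form of every addend of a `μ`-redex: the body `w` contains the bags of `t` at the
same depth, and `μ` moves whatever else `w` contains to depth at least `1`. -/
theorem drop_of_body (a b : ℕ) (t w : Rt) (bag : List Rt)
    (hd : degMu w = degMu t + degMuBag bag) (hle : depths t ≤ depths w) :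
    Drop (.app (.mu a b t) bag) (.mu a b w) := by
  obtain ⟨W, hW⟩ := Multiset.le_iff_exists_add.1 hle
  refine ⟨by simp only [degMu]; omega, (depths t).map (· + 1), 0 ::ₘ depthsBag bag,
    W.map (· + 1), 0, by simp [depths], by simp [depths, hW], by simp,
    by simp only [degMu]; omega, ?_⟩
  intro y hy
  obtain ⟨z, hz, rfl⟩ := Multiset.mem_map.1 hy
  exact Nat.succ_pos z

theorem drop_of_muRedex (a b : ℕ) (t : Rt) (bag : List Rt) (s : Rt)
    (h : s ∈ muRedex a b t bag) : Drop (.app (.mu a b t) bag) s := by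
  unfold muRedex at h
  split_ifs at h with hab
  · subst hab
    simp only [Multiset.mem_bind, Multiset.mem_map] at h
    obtain ⟨p, hp, s, hs, rfl⟩ := h
    obtain ⟨hd, hle⟩ := nApp_spec b t p.1 s hs
    have := splits2_spec bag p hp
    refine drop_of_body _ _ _ _ _ (by simp only [degMu]; omega) ?_
    simp only [depths]
    exact (hle.trans (Multiset.le_add_right _ _)).trans (Multiset.le_cons_self _ _)
  · simp only [Multiset.mem_map] at h
    obtain ⟨s, hs, rfl⟩ := h
    obtain ⟨hd, hle⟩ := nApp_spec a t bag s hs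
    exact drop_of_body _ _ _ _ _ hd hle

theorem drop_of_ctx {t : Rt} {S : Multiset Rt} (h : Ctx BaseMu t S) : ∀ s ∈ S, Drop t s := by
  induction h with
  | base h =>
    obtain ⟨a, b, t, bag⟩ := h
    exact drop_of_muRedex a b t bag
  | lam x _ ih =>
    intro s' hs'
    obtain ⟨s, hs, rfl⟩ := Multiset.mem_map.1 hs'
    exact (ih s hs).lam x
  | mu a b _ ih =>
    intro s' hs'
    obtain ⟨s, hs, rfl⟩ := Multiset.mem_map.1 hs'
    exact (ih s hs).mu a b
  | appL bag _ ih =>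
    intro s' hs'
    obtain ⟨s, hs, rfl⟩ := Multiset.mem_map.1 hs'
    refine (ih s hs).extend (degMuBag bag) (0 ::ₘ depthsBag bag) rfl rfl ?_ ?_ <;>
      simp only [depths, Multiset.cons_add, add_comm (depthsBag bag)]
  | appR t l r _ ih =>
    intro s' hs'
    obtain ⟨s, hs, rfl⟩ := Multiset.mem_map.1 hs'
    refine (ih s hs).extend (degMu t + degMuBag l + degMuBag r)
      (0 ::ₘ (depths t + depthsBag l + depthsBag r)) ?_ ?_ ?_ ?_
    · simp only [degMu, degMuBag_append, degMuBag]; omega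
    · simp only [degMu, degMuBag_append, degMuBag]; omega
    · simp only [depths, depthsBag_append, depthsBag, Multiset.cons_add]; congr 1; abel
    · simp only [depths, depthsBag_append, depthsBag, Multiset.cons_add]; congr 1; abel

end RLMu

namespace RLMu

/-- Proposition 2.8: a μʳ-reduction step strictly decreases the multiset
measure `m` of the contracted addend. -/
theorem muStep_msr_decreases (t t' : Rt) (T : Finset Rt)
    (h : StepMu t (insert t' T)) :
    MLT (Rt.msr t') (Rt.msr t) := by
  obtain ⟨S, hS, hT⟩ := h
  have hmem : t' ∈ S := by
    rw [← Multiset.mem_toFinset, ← hT]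
    exact Finset.mem_insert_self _ _
  exact (drop_of_ctx hS t' hmem).mlt

end RLMu
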